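/- Let φ: X → B_d(1) ⊆ ℝ^d and let G = {x ↦ ⟨φ(x), θ⟩ : ‖θ‖₂ ≤ R'}. Then for any family Π of probability distributions on X and any ε > 0, dim_DE(G, Π, ε) ≤ O(d · log(1 + R'/ε)). -/

import Mathlib

open MeasureTheory
open scoped RealInnerProductSpace

/-- Expectation of `g` under the measure `μ`. -/
noncomputable def mExp {X : Type*} [MeasurableSpace X] (μ : Measure X) (g : X → ℝ) : ℝ :=
  ∫ x, g x ∂μ

/-- Distributional Eluder dimension `dim_DE(G, Π, ε)`. -/
noncomputable def dimDE {X : Type*} [MeasurableSpace X]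
    (G : Set (X → ℝ)) (Pi : Set (Measure X)) (ε : ℝ) : ℕ :=
  sSup {n | ∃ ρ : Fin n → Measure X, (∀ i, ρ i ∈ Pi) ∧ ∃ ε' ≥ ε, ∀ i : Fin n,
    ∃ g ∈ G,
      Real.sqrt (∑ j : Fin n, if (j : ℕ) < (i : ℕ) then (mExp (ρ j) g) ^ 2 else 0) ≤ ε' ∧
      ε' < |mExp (ρ i) g|}

/-!
Linear functions see an independent sequence of distributions only through the mean features
`xᵢ = E_{ρᵢ}[φ]`. After rescaling to threshold `1` and `‖θᵢ‖ ≤ 1`, let `Vᵢ = 1 + ∑ j < i, xⱼ xⱼᵀ`.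
Independence gives `θᵢᵀ Vᵢ θᵢ ≤ 2` and `⟪xᵢ, θᵢ⟫² > 1`, so `xᵢᵀ Vᵢ⁻¹ xᵢ > 1/2` by Cauchy–Schwarz,
and by the matrix determinant lemma each step multiplies `det V` by more than `3/2`. On the other
hand, AM-GM on the eigenvalues gives `det V ≤ (tr V / d) ^ d ≤ (1 + n L² / d) ^ d` after `n` steps,
with `L` a bound for the rescaled `‖xᵢ‖`. An exponential in `n / d` is thus at most linear in
`n / d`, which forces `n = O(d log (1 + L))`.
-/

lemma prod_le_arith_mean_pow_card {ι : Type*} [Fintype ι] (z : ι → ℝ) (hz : ∀ i, 0 ≤ z i) :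
    ∏ i, z i ≤ ((∑ i, z i) / Fintype.card ι) ^ Fintype.card ι := by
  cases isEmpty_or_nonempty ι
  · simp
  have amgm : (∏ i, z i) ^ (Fintype.card ι : ℝ)⁻¹ ≤ (∑ i, z i) / Fintype.card ι := by
    simpa using Real.geom_mean_le_arith_mean Finset.univ (fun _ => 1) z (by simp)
      (by simp [Fintype.card_pos]) (fun i _ => hz i)
  have prod_nonneg : 0 ≤ ∏ i, z i := Finset.prod_nonneg fun i _ => hz i
  calc ∏ i, z i = ((∏ i, z i) ^ (Fintype.card ι : ℝ)⁻¹) ^ Fintype.card ι :=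
        (Real.rpow_inv_natCast_pow prod_nonneg Fintype.card_ne_zero).symm
    _ ≤ ((∑ i, z i) / Fintype.card ι) ^ Fintype.card ι := by gcongr

section Determinant

open Matrix

variable {ι α : Type*} [DecidableEq ι]

/-- The regularised Gram (design) matrix `1 + ∑ j ∈ s, xⱼ xⱼᵀ` of the vectors `x j` with `j ∈ s`,
whose determinant is the potential of the elliptical potential argument. -/
def regGram (x : α → ι → ℝ) (s : Finset α) : Matrix ι ι ℝ :=
  1 + ∑ j ∈ s, vecMulVec (x j) (x j)

lemma posDef_regGram [Finite ι] (x : α → ι → ℝ) (s : Finset α) : (regGram x s).PosDef :=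
  PosDef.one.add_posSemidef <|
    posSemidef_sum s fun j _ => by simpa using posSemidef_vecMulVec_self_star (x j)

lemma regGram_insert [DecidableEq α] (x : α → ι → ℝ) {s : Finset α} {a : α} (ha : a ∉ s) :
    regGram x (insert a s) = regGram x s + vecMulVec (x a) (x a) := by
  rw [regGram, regGram, Finset.sum_insert ha, add_comm (vecMulVec _ _), add_assoc]

variable [Fintype ι]

lemma det_add_vecMulVec {K : Type*} [CommRing K] {A : Matrix ι ι K} (hA : IsUnit A.det)
    (u v : ι → K) : (A + vecMulVec u v).det = A.det * (1 + v ⬝ᵥ A⁻¹ *ᵥ u) := by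
  rw [vecMulVec_eq Unit, det_add_replicateCol_mul_replicateRow hA, Matrix.mul_assoc,
    ← replicateCol_mulVec, det_unique (n := Unit)]
  rfl

lemma sq_dotProduct_le_of_posDef {A : Matrix ι ι ℝ} (hA : A.PosDef) (x v : ι → ℝ) :
    (x ⬝ᵥ v) ^ 2 ≤ (x ⬝ᵥ A⁻¹ *ᵥ x) * (v ⬝ᵥ A *ᵥ v) := by
  have symm : LinearMap.IsSymm A.toBilin' := ⟨fun v w => by
    have transpose_eq : Aᵀ = A := hA.isHermitian
    simp only [RingHom.id_apply, toBilin'_apply']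
    rw [dotProduct_mulVec, ← mulVec_transpose, transpose_eq, dotProduct_comm]⟩
  have nonneg (w : ι → ℝ) : 0 ≤ A.toBilin' w w := by
    simpa [toBilin'_apply'] using hA.posSemidef.dotProduct_mulVec_nonneg w
  have mulVec_inv : A *ᵥ (A⁻¹ *ᵥ x) = x := by
    rw [mulVec_mulVec, mul_nonsing_inv _ hA.det_pos.ne'.isUnit, one_mulVec]
  have cauchy_schwarz := A.toBilin'.apply_sq_le_of_symm nonneg symm v (A⁻¹ *ᵥ x)
  simp only [toBilin'_apply', mulVec_inv] at cauchy_schwarz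
  rwa [dotProduct_comm v, dotProduct_comm _ x, mul_comm] at cauchy_schwarz

lemma three_halves_mul_det_le_det_add_vecMulVec {A : Matrix ι ι ℝ} (hA : A.PosDef) {x v : ι → ℝ}
    (hv : v ⬝ᵥ A *ᵥ v ≤ 2) (hxv : 1 ≤ (x ⬝ᵥ v) ^ 2) :
    3 / 2 * A.det ≤ (A + vecMulVec x x).det := by
  have inv_nonneg : 0 ≤ x ⬝ᵥ A⁻¹ *ᵥ x := by
    simpa using hA.inv.posSemidef.dotProduct_mulVec_nonneg x
  have half_le : 1 / 2 ≤ x ⬝ᵥ A⁻¹ *ᵥ x := by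
    have := sq_dotProduct_le_of_posDef hA x v
    have := mul_le_mul_of_nonneg_left hv inv_nonneg
    linarith
  rw [det_add_vecMulVec hA.det_pos.ne'.isUnit, mul_comm]
  exact mul_le_mul_of_nonneg_left (by linarith) hA.det_pos.le

lemma det_le_trace_div_card_pow_card {A : Matrix ι ι ℝ} (hA : A.PosSemidef) :
    A.det ≤ (A.trace / Fintype.card ι) ^ Fintype.card ι := by
  have det_eq : A.det = ∏ i, hA.isHermitian.eigenvalues i := by
    simpa using hA.isHermitian.det_eq_prod_eigenvalues
  have trace_eq : A.trace = ∑ i, hA.isHermitian.eigenvalues i := by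
    simpa using hA.isHermitian.trace_eq_sum_eigenvalues
  rw [det_eq, trace_eq]
  exact prod_le_arith_mean_pow_card _ hA.eigenvalues_nonneg

lemma dotProduct_regGram_mulVec (x : α → ι → ℝ) (s : Finset α) (v : ι → ℝ) :
    v ⬝ᵥ regGram x s *ᵥ v = v ⬝ᵥ v + ∑ j ∈ s, (x j ⬝ᵥ v) ^ 2 := by
  simp [regGram, add_mulVec, sum_mulVec, sum_dotProduct, vecMulVec_mulVec, dotProduct_comm v, sq]

lemma trace_regGram (x : α → ι → ℝ) (s : Finset α) :
    (regGram x s).trace = Fintype.card ι + ∑ j ∈ s, x j ⬝ᵥ x j := by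
  simp [regGram, trace_sum, trace_vecMulVec]

lemma three_halves_pow_card_le_det_regGram [LinearOrder α] {x θ : α → ι → ℝ} {s : Finset α}
    (hθ : ∀ i ∈ s, θ i ⬝ᵥ θ i ≤ 1)
    (hsum : ∀ i ∈ s, ∑ j ∈ s with j < i, (x j ⬝ᵥ θ i) ^ 2 ≤ 1)
    (hge : ∀ i ∈ s, 1 ≤ (x i ⬝ᵥ θ i) ^ 2) :
    (3 / 2 : ℝ) ^ s.card ≤ (regGram x s).det := by
  induction s using Finset.induction_on_max with
  | empty => simp [regGram]
  | insert a s hs ih =>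
    have a_notMem : a ∉ s := fun ha => (hs a ha).false
    have sum_sq_le : ∑ j ∈ s, (x j ⬝ᵥ θ a) ^ 2 ≤ 1 := by
      have := hsum a (s.mem_insert_self a)
      rwa [Finset.filter_insert, if_neg (lt_irrefl a), Finset.filter_true_of_mem hs] at this
    have quad_le_two : θ a ⬝ᵥ regGram x s *ᵥ θ a ≤ 2 := by
      rw [dotProduct_regGram_mulVec]
      linarith [hθ a (s.mem_insert_self a)]
    have pow_le_det : (3 / 2 : ℝ) ^ s.card ≤ (regGram x s).det := by
      refine ih (fun i hi => hθ i (s.mem_insert_of_mem hi)) (fun i hi => ?_)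
        fun i hi => hge i (s.mem_insert_of_mem hi)
      have := hsum i (s.mem_insert_of_mem hi)
      rwa [Finset.filter_insert, if_neg (hs i hi).asymm] at this
    calc (3 / 2 : ℝ) ^ (insert a s).card = 3 / 2 * (3 / 2) ^ s.card := by
          rw [Finset.card_insert_of_notMem a_notMem, pow_succ']
      _ ≤ 3 / 2 * (regGram x s).det := by gcongr
      _ ≤ (regGram x (insert a s)).det := by
          rw [regGram_insert x a_notMem]
          exact three_halves_mul_det_le_det_add_vecMulVec (posDef_regGram x s) quad_le_two
            (hge a (s.mem_insert_self a))

lemma det_regGram_le (x : α → ι → ℝ) (s : Finset α) {L : ℝ} (hx : ∀ j ∈ s, x j ⬝ᵥ x j ≤ L ^ 2) :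
    (regGram x s).det ≤ (1 + s.card / Fintype.card ι * L ^ 2) ^ Fintype.card ι := by
  cases isEmpty_or_nonempty ι
  · simp
  have trace_le : (regGram x s).trace ≤ Fintype.card ι + s.card * L ^ 2 := by
    rw [trace_regGram, ← nsmul_eq_mul]
    gcongr
    exact Finset.sum_le_card_nsmul s _ _ hx
  have trace_nonneg : 0 ≤ (regGram x s).trace := (posDef_regGram x s).posSemidef.trace_nonneg
  calc (regGram x s).det ≤ ((regGram x s).trace / Fintype.card ι) ^ Fintype.card ι :=
        det_le_trace_div_card_pow_card (posDef_regGram x s).posSemidef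
    _ ≤ ((Fintype.card ι + s.card * L ^ 2) / Fintype.card ι) ^ Fintype.card ι := by gcongr
    _ = (1 + s.card / Fintype.card ι * L ^ 2) ^ Fintype.card ι := by field_simp

end Determinant

-- The slope `1 / 8` in `u` has to stay below the rate `1 / 3 ≤ log (3 / 2)` it is compared with;
-- `1 / 3 - 1 / 8 = 5 / 24` is the source of the final constant `24`.
lemma log_one_add_mul_sq_le {u L : ℝ} (hu : 0 ≤ u) (hL : 1 ≤ L) :
    Real.log (1 + u * L ^ 2) ≤ u / 8 + 5 * Real.log (1 + L) := by
  have split : 1 + u * L ^ 2 ≤ (1 + u) / 8 * (1 + L) ^ 5 := by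
    have eight_le : 2 ^ 3 ≤ (1 + L) ^ 3 := by gcongr; linarith
    calc 1 + u * L ^ 2 ≤ (1 + u) * (1 + L) ^ 2 := by nlinarith
      _ = (1 + u) / 8 * (2 ^ 3 * (1 + L) ^ 2) := by ring
      _ ≤ (1 + u) / 8 * ((1 + L) ^ 3 * (1 + L) ^ 2) := by gcongr
      _ = (1 + u) / 8 * (1 + L) ^ 5 := by ring
  calc Real.log (1 + u * L ^ 2) ≤ Real.log ((1 + u) / 8 * (1 + L) ^ 5) :=
        Real.log_le_log (by positivity) split
    _ = Real.log ((1 + u) / 8) + 5 * Real.log (1 + L) := by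
        rw [Real.log_mul (by positivity) (by positivity), Real.log_pow]; norm_num
    _ ≤ u / 8 + 5 * Real.log (1 + L) := by
        linarith [Real.log_le_sub_one_of_pos (show 0 < (1 + u) / 8 by positivity)]

lemma le_mul_log_of_three_halves_pow_le {n d : ℕ} {L : ℝ} (hL : 1 ≤ L)
    (h : (3 / 2 : ℝ) ^ n ≤ (1 + n / d * L ^ 2) ^ d) :
    (n : ℝ) ≤ 24 * d * Real.log (1 + L) := by
  have third_le_log : (1 / 3 : ℝ) ≤ Real.log (3 / 2) := by
    have := Real.one_sub_inv_le_log_of_pos (show (0 : ℝ) < 3 / 2 by norm_num)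
    norm_num at this ⊢
    exact this
  -- Not an equality only because `n / d = 0` when `d = 0`.
  have mul_div_le : (d : ℝ) * (n / d) ≤ n := by
    rw [mul_div_left_comm]
    exact mul_le_of_le_one_right n.cast_nonneg (div_self_le_one _)
  have main : n * (1 / 3 : ℝ) ≤ n / 8 + 5 * (d * Real.log (1 + L)) :=
    calc n * (1 / 3 : ℝ) ≤ n * Real.log (3 / 2) := by gcongr
      _ ≤ d * Real.log (1 + n / d * L ^ 2) := by
          simpa only [Real.log_pow] using Real.log_le_log (by positivity) h
      _ ≤ d * (n / d / 8 + 5 * Real.log (1 + L)) := by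
          gcongr; exact log_one_add_mul_sq_le (by positivity) hL
      _ = d * (n / d) / 8 + 5 * (d * Real.log (1 + L)) := by ring
      _ ≤ n / 8 + 5 * (d * Real.log (1 + L)) := by gcongr
  linarith

section InnerProductSpace

variable {α E : Type*} [Fintype α] [LinearOrder α] [NormedAddCommGroup E] [InnerProductSpace ℝ E]

/-- Every `x i` is `ε`-independent of its predecessors, as witnessed by the linear functional
`⟪·, θ i⟫`: the vector form of the independence in the Eluder dimension. -/
structure IsEluderSeq (x θ : α → E) (ε : ℝ) : Prop where
  sum_sq_le (i : α) : ∑ j with j < i, ⟪x j, θ i⟫ ^ 2 ≤ ε ^ 2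
  lt_abs (i : α) : ε < |⟪x i, θ i⟫|

namespace IsEluderSeq

variable {x θ : α → E} {ε : ℝ}

lemma smul (h : IsEluderSeq x θ ε) {a b : ℝ} (hab : 0 < a * b) :
    IsEluderSeq (a • x) (b • θ) (a * b * ε) where
  sum_sq_le i := by
    have inner_smul (j : α) : ⟪(a • x) j, (b • θ) i⟫ ^ 2 = (a * b) ^ 2 * ⟪x j, θ i⟫ ^ 2 := by
      simp only [Pi.smul_apply, real_inner_smul_left, real_inner_smul_right]; ring
    simp only [inner_smul, ← Finset.mul_sum, mul_pow _ ε]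
    gcongr
    exact h.sum_sq_le i
  lt_abs i := by
    have inner_smul : ⟪(a • x) i, (b • θ) i⟫ = a * b * ⟪x i, θ i⟫ := by
      simp only [Pi.smul_apply, real_inner_smul_left, real_inner_smul_right]; ring
    rw [inner_smul, abs_mul, abs_of_pos hab]
    gcongr
    exact h.lt_abs i

lemma lt_mul_of_norm_le (h : IsEluderSeq x θ ε) {B R : ℝ} {i : α} (hx : ‖x i‖ ≤ B)
    (hθ : ‖θ i‖ ≤ R) : ε < B * R :=
  calc ε < |⟪x i, θ i⟫| := h.lt_abs i
    _ ≤ ‖x i‖ * ‖θ i‖ := abs_real_inner_le_norm _ _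
    _ ≤ B * R := by gcongr; exact (norm_nonneg _).trans hx

variable [FiniteDimensional ℝ E]

open Module

lemma three_halves_pow_card_le (h : IsEluderSeq x θ 1) {L : ℝ} (hx : ∀ i, ‖x i‖ ≤ L)
    (hθ : ∀ i, ‖θ i‖ ≤ 1) :
    (3 / 2 : ℝ) ^ Fintype.card α ≤
      (1 + Fintype.card α / finrank ℝ E * L ^ 2) ^ finrank ℝ E := by
  let coords (v : E) : Fin (finrank ℝ E) → ℝ := ((stdOrthonormalBasis ℝ E).repr v).ofLp
  have dotProduct_coords (v w : E) : coords v ⬝ᵥ coords w = ⟪v, w⟫ := by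
    rw [← (stdOrthonormalBasis ℝ E).repr.inner_map_map, EuclideanSpace.inner_eq_star_dotProduct,
      dotProduct_comm, star_trivial]
  have lower : (3 / 2 : ℝ) ^ Fintype.card α ≤ (regGram (coords ∘ x) Finset.univ).det := by
    refine three_halves_pow_card_le_det_regGram (θ := coords ∘ θ)
      (fun i _ => ?_) (fun i _ => ?_) fun i _ => ?_
    all_goals simp only [Function.comp_apply, dotProduct_coords]
    · rw [real_inner_self_eq_norm_sq]
      exact pow_le_one₀ (norm_nonneg _) (hθ i)
    · simpa using h.sum_sq_le i
    · exact (one_le_sq_iff_one_le_abs _).2 (h.lt_abs i).le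
  have upper := det_regGram_le (coords ∘ x) Finset.univ (L := L) fun j _ => by
    simp only [Function.comp_apply, dotProduct_coords, real_inner_self_eq_norm_sq]
    gcongr
    exact hx j
  simpa using lower.trans upper

lemma card_le (h : IsEluderSeq x θ ε) (hε : 0 < ε) {B R : ℝ} (hB : 0 ≤ B) (hR : 0 ≤ R)
    (hx : ∀ i, ‖x i‖ ≤ B) (hθ : ∀ i, ‖θ i‖ ≤ R) :
    (Fintype.card α : ℝ) ≤ 24 * finrank ℝ E * Real.log (1 + B * R / ε) := by
  rcases isEmpty_or_nonempty α with _ | ⟨⟨i⟩⟩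
  · have log_nonneg : 0 ≤ Real.log (1 + B * R / ε) :=
      Real.log_nonneg (le_add_of_nonneg_right (by positivity))
    rw [Fintype.card_eq_zero, Nat.cast_zero]
    positivity
  have ε_lt : ε < B * R := h.lt_mul_of_norm_le (hx i) (hθ i)
  have R_pos : 0 < R := hR.lt_of_ne (by rintro rfl; linarith)
  have unit_scale : IsEluderSeq ((R / ε) • x) (R⁻¹ • θ) 1 := by
    convert h.smul (a := R / ε) (b := R⁻¹) (by positivity) using 1
    field_simp
  refine le_mul_log_of_three_halves_pow_le ((one_le_div hε).2 ε_lt.le)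
    (unit_scale.three_halves_pow_card_le (fun i => ?_) fun i => ?_)
  · calc ‖((R / ε) • x) i‖ = R / ε * ‖x i‖ := by
          rw [Pi.smul_apply, norm_smul, Real.norm_of_nonneg (by positivity)]
      _ ≤ R / ε * B := by gcongr; exact hx i
      _ = B * R / ε := by ring
  · calc ‖(R⁻¹ • θ) i‖ = R⁻¹ * ‖θ i‖ := by
          rw [Pi.smul_apply, norm_smul, Real.norm_of_nonneg (by positivity)]
      _ ≤ R⁻¹ * R := by gcongr; exact hθ i
      _ = 1 := inv_mul_cancel₀ R_pos.ne'

end IsEluderSeq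

end InnerProductSpace

section Distributional

variable {X E : Type*} [MeasurableSpace X] [NormedAddCommGroup E] [InnerProductSpace ℝ E]

lemma mExp_inner [CompleteSpace E] {μ : Measure X} {φ : X → E} (hφ : Integrable φ μ) (θ : E) :
    mExp μ (fun x => ⟪φ x, θ⟫) = ⟪∫ x, φ x ∂μ, θ⟫ := by
  simp only [mExp, real_inner_comm θ, integral_inner hφ]

-- All lengths are bounded, so the junk value `sSup s = 0` for unbounded `s` does not arise.
lemma natCast_dimDE_le {G : Set (X → ℝ)} {Pi : Set (Measure X)} {ε C : ℝ}
    (hC : ∀ n (ρ : Fin n → Measure X), (∀ i, ρ i ∈ Pi) → ∀ ε' ≥ ε,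
      (∀ i, ∃ g ∈ G, √(∑ j with j < i, mExp (ρ j) g ^ 2) ≤ ε' ∧ ε' < |mExp (ρ i) g|) → n ≤ C) :
    (dimDE G Pi ε : ℝ) ≤ C := by
  have C_nonneg : 0 ≤ C := by
    exact_mod_cast hC 0 Fin.elim0 (fun i => i.elim0) ε le_rfl fun i => i.elim0
  refine (Nat.le_floor_iff C_nonneg).1 (csSup_le' ?_)
  rintro n ⟨ρ, hρ, ε', hε', hindep⟩
  refine Nat.le_floor (hC n ρ hρ ε' hε' ?_)
  simpa only [Finset.sum_filter, Fin.lt_def] using hindep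

lemma exists_isEluderSeq_mean [CompleteSpace E] {α : Type*} [Fintype α] [LinearOrder α]
    {φ : X → E} {R ε : ℝ} (hε : 0 ≤ ε) {ρ : α → Measure X} (hφ : ∀ i, Integrable φ (ρ i))
    (hindep : ∀ i, ∃ g ∈ {g | ∃ θ : E, ‖θ‖ ≤ R ∧ g = fun x => ⟪φ x, θ⟫},
      √(∑ j with j < i, mExp (ρ j) g ^ 2) ≤ ε ∧ ε < |mExp (ρ i) g|) :
    ∃ θ : α → E, (∀ i, ‖θ i‖ ≤ R) ∧ IsEluderSeq (fun i => ∫ x, φ x ∂ρ i) θ ε := by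
  have witness (i : α) : ∃ θ : E, ‖θ‖ ≤ R ∧
      ∑ j with j < i, ⟪∫ x, φ x ∂ρ j, θ⟫ ^ 2 ≤ ε ^ 2 ∧ ε < |⟪∫ x, φ x ∂ρ i, θ⟫| := by
    obtain ⟨_, ⟨θ, hθ, rfl⟩, hsum, hlt⟩ := hindep i
    rw [Real.sqrt_le_left hε] at hsum
    simp only [mExp_inner (hφ _)] at hsum hlt
    exact ⟨θ, hθ, hsum, hlt⟩
  choose θ hθ hsum hlt using witness
  exact ⟨θ, hθ, hsum, hlt⟩

theorem statement16_general [FiniteDimensional ℝ E] {φ : X → E} {R ε B : ℝ}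
    {Pi : Set (Measure X)} (hε : 0 < ε) (hR : 0 ≤ R) (hB : 0 ≤ B)
    (hφ : ∀ μ ∈ Pi, Integrable φ μ) (hmean : ∀ μ ∈ Pi, ‖∫ x, φ x ∂μ‖ ≤ B) :
    (dimDE {g | ∃ θ : E, ‖θ‖ ≤ R ∧ g = fun x => ⟪φ x, θ⟫} Pi ε : ℝ) ≤
      24 * Module.finrank ℝ E * Real.log (1 + B * R / ε) := by
  refine natCast_dimDE_le fun n ρ hρ ε' hε' hindep => ?_
  have ε'_pos : 0 < ε' := hε.trans_le hε'
  obtain ⟨θ, hθ, hseq⟩ := exists_isEluderSeq_mean ε'_pos.le (fun i => hφ _ (hρ i)) hindep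
  calc (n : ℝ) ≤ 24 * Module.finrank ℝ E * Real.log (1 + B * R / ε') := by
        simpa using hseq.card_le ε'_pos hB hR (fun i => hmean _ (hρ i)) hθ
    _ ≤ 24 * Module.finrank ℝ E * Real.log (1 + B * R / ε) := by gcongr

end Distributional

/-- the class of `d`-dimensional linear functions with feature
norm ≤ 1 and parameter norm ≤ R' has distributional Eluder dimension
`O(d log(1 + R'/ε))` with respect to any family of probability distributions. -/
theorem statement16 :
    ∃ c : ℝ, 0 < c ∧
      ∀ (d : ℕ) (X : Type) [MeasurableSpace X]
        (φ : X → EuclideanSpace ℝ (Fin d)) (R' ε : ℝ) (Pi : Set (Measure X)),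
        0 < ε → 0 ≤ R' →
        Measurable φ →
        (∀ x, ‖φ x‖ ≤ 1) →
        (∀ μ ∈ Pi, IsProbabilityMeasure μ) →
        (dimDE {g | ∃ θ : EuclideanSpace ℝ (Fin d), ‖θ‖ ≤ R' ∧
            g = fun x => ⟪φ x, θ⟫} Pi ε : ℝ) ≤
          c * (d : ℝ) * Real.log (1 + R' / ε) := by
  refine ⟨24, by norm_num, fun d X _ φ R' ε Pi hε hR hφm hφ hPi => ?_⟩
  have integrable_feature : ∀ μ ∈ Pi, Integrable φ μ := fun μ hμ =>
    have := hPi μ hμ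
    .of_bound hφm.aestronglyMeasurable 1 (.of_forall hφ)
  have norm_mean_le_one : ∀ μ ∈ Pi, ‖∫ x, φ x ∂μ‖ ≤ 1 := fun μ hμ => by
    have := hPi μ hμ
    simpa using norm_integral_le_of_norm_le_const (μ := μ) (.of_forall hφ)
  simpa using statement16_general hε hR zero_le_one integrable_feature norm_mean_le_one
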